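/- Let V be a 3-dimensional vector space over an algebraically closed field k with basis {x_0, x_1, x_2} indexed by Z/3, and let q ∈ k^×. Define c: V ⊗ V → V ⊗ V by c(x_i ⊗ x_j) = q · x_{−i−j} ⊗ x_i. Then c satisfies the braid equation (c ⊗ id)(id ⊗ c)(c ⊗ id) = (id ⊗ c)(c ⊗ id)(id ⊗ c) on V ⊗ V ⊗ V, and c³ = q³ · id as an endomorphism of V ⊗ V. -/

import Mathlib

open TensorProduct

/-- Let `V` be the 3-dimensional vector space with basis `x_0, x_1, x_2` indexed by
`ℤ/3` (here `V = ZMod 3 → k`, `x_i = Pi.single i 1`), `q ∈ kˣ`, and let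
`c : V ⊗ V → V ⊗ V` be the linear map with `c(x_i ⊗ x_j) = q · x_{−i−j} ⊗ x_i`. Then `c`
satisfies the braid equation on `V ⊗ V ⊗ V` and `c³ = q³ · id`. -/
theorem stmt12 {k : Type*} [Field k] (q : k) (hq : q ≠ 0)
    (c : ((ZMod 3 → k) ⊗[k] (ZMod 3 → k)) →ₗ[k] ((ZMod 3 → k) ⊗[k] (ZMod 3 → k)))
    (hc : ∀ i j : ZMod 3,
      c ((Pi.single i 1 : ZMod 3 → k) ⊗ₜ[k] (Pi.single j 1 : ZMod 3 → k))
        = q • ((Pi.single (-i - j) 1 : ZMod 3 → k) ⊗ₜ[k] (Pi.single i 1 : ZMod 3 → k))) :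
    (((TensorProduct.assoc k (ZMod 3 → k) (ZMod 3 → k) (ZMod 3 → k)).toLinearMap ∘ₗ
          TensorProduct.map c LinearMap.id ∘ₗ
          (TensorProduct.assoc k (ZMod 3 → k) (ZMod 3 → k) (ZMod 3 → k)).symm.toLinearMap) ∘ₗ
        (TensorProduct.map LinearMap.id c) ∘ₗ
        ((TensorProduct.assoc k (ZMod 3 → k) (ZMod 3 → k) (ZMod 3 → k)).toLinearMap ∘ₗ
          TensorProduct.map c LinearMap.id ∘ₗ
          (TensorProduct.assoc k (ZMod 3 → k) (ZMod 3 → k) (ZMod 3 → k)).symm.toLinearMap)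
      = (TensorProduct.map LinearMap.id c) ∘ₗ
        ((TensorProduct.assoc k (ZMod 3 → k) (ZMod 3 → k) (ZMod 3 → k)).toLinearMap ∘ₗ
          TensorProduct.map c LinearMap.id ∘ₗ
          (TensorProduct.assoc k (ZMod 3 → k) (ZMod 3 → k) (ZMod 3 → k)).symm.toLinearMap) ∘ₗ
        (TensorProduct.map LinearMap.id c)) ∧
    c ∘ₗ c ∘ₗ c
      = q ^ 3 • (LinearMap.id :
          ((ZMod 3 → k) ⊗[k] (ZMod 3 → k)) →ₗ[k] ((ZMod 3 → k) ⊗[k] (ZMod 3 → k))) := by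
  have h3 : ∀ i : ZMod 3, i + i = -i := by decide
  constructor
  · refine ((Pi.basisFun k (ZMod 3)).tensorProduct
      ((Pi.basisFun k (ZMod 3)).tensorProduct (Pi.basisFun k (ZMod 3)))).ext ?_
    rintro ⟨i, j, l⟩
    have e : -(-i - j) - (-i - l) = -i - (-j - l) := by
      calc -(-i - j) - (-i - l) = (i + i) + j + l := by ring
        _ = -i - (-j - l) := by rw [h3]; ring
    simp only [Module.Basis.tensorProduct_apply, Pi.basisFun_apply, LinearMap.comp_apply,
      LinearEquiv.coe_coe, TensorProduct.assoc_symm_tmul, TensorProduct.assoc_tmul,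
      TensorProduct.map_tmul, LinearMap.id_apply, hc, ← TensorProduct.smul_tmul',
      TensorProduct.tmul_smul, map_smul, e]
  · refine ((Pi.basisFun k (ZMod 3)).tensorProduct (Pi.basisFun k (ZMod 3))).ext ?_
    rintro ⟨i, j⟩
    have e1 : -(-i - j) - i = j := by ring
    have e2 : -j - (-i - j) = i := by ring
    simp only [Module.Basis.tensorProduct_apply, Pi.basisFun_apply, LinearMap.comp_apply,
      LinearMap.smul_apply, LinearMap.id_apply, hc, map_smul, e1, e2, smul_smul]
    congr 1
    ring
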